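/- arXiv:1707.03287 — 2 statements merged into one kernel-verified Lean document; each statement's English description precedes it below -/
import Mathlib

section
/- Let I ⊆ ℝ be an open interval, let q : ℝ → ℝ be continuous on I, and let α : ℝ → ℝ be three times continuously differentiable on I with α'(t) ≠ 0 for all t ∈ I, such that α' satisfies Kummer's equation q(t) − (α'(t))² − (1/2)·α'''(t)/α'(t) + (3/4)·(α''(t)/α'(t))² = 0 for all t ∈ I. Define u(t) = cos(α(t))/√|α'(t)| and v(t) = sin(α(t))/√|α'(t)|. Then for every twice differentiable function y : ℝ → ℝ satisfying y''(t) + q(t)·y(t) = 0 for all t ∈ I, there exist real constants a and b such that y(t) = a·u(t) + b·v(t) for all t ∈ I. -/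
/-!
The amplitude `r = 1 / √|α'|` satisfies `2 r' α' + r α'' = 0` for every `α`, while Kummer's equation
says exactly that `r'' = (α' ^ 2 - q) r`. These two identities make `r cos α`, and after shifting
the phase by `π / 2` also `r sin α`, a solution of `y'' + q y = 0`. The Wronskian of the two is
`r ^ 2 α' = ±1`, and since Wronskians of solutions are constant, Cramer's rule expresses every
solution in terms of these two with constant coefficients.
-/

section LinearEquation

variable {𝕜 E : Type*} [RCLike 𝕜] [NormedAddCommGroup E] [NormedSpace 𝕜 E]

/-- `y` is a twice differentiable solution of `y'' + q • y = 0` on `s`. Derivatives are two-sided,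
so the notion is meant for open `s`. -/
structure IsSolutionOn (q : 𝕜 → 𝕜) (y : 𝕜 → E) (s : Set 𝕜) : Prop where
  differentiableAt : ∀ t ∈ s, DifferentiableAt 𝕜 y t
  differentiableAt_deriv : ∀ t ∈ s, DifferentiableAt 𝕜 (deriv y) t
  deriv_deriv_add : ∀ t ∈ s, deriv (deriv y) t + q t • y t = 0

/-- The Wronskian `f • g' - f' • g`. The second function may be vector-valued, so that Cramer's rule
applies to vector-valued solutions of a scalar equation. -/
noncomputable def wronskian (f : 𝕜 → 𝕜) (g : 𝕜 → E) (t : 𝕜) : E :=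
  f t • deriv g t - deriv f t • g t

theorem wronskian_smul_eq_sub (f g : 𝕜 → 𝕜) (y : 𝕜 → E) (t : 𝕜) :
    wronskian f g t • y t = g t • wronskian f y t - f t • wronskian g y t := by
  simp only [wronskian, smul_eq_mul]
  module

namespace IsSolutionOn

variable {q f g : 𝕜 → 𝕜} {y y' : 𝕜 → E} {s : Set 𝕜} {t t₀ : 𝕜}

theorem of_hasDerivAt (hs : IsOpen s) (hy : ∀ t ∈ s, HasDerivAt y (y' t) t)
    (hy' : ∀ t ∈ s, HasDerivAt y' (-(q t • y t)) t) : IsSolutionOn q y s := by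
  have hasDerivAt_deriv : ∀ t ∈ s, HasDerivAt (deriv y) (-(q t • y t)) t := fun t ht =>
    (hy' t ht).congr_of_eventuallyEq <|
      Filter.eventuallyEq_of_mem (hs.mem_nhds ht) fun x hx => (hy x hx).deriv
  exact
    { differentiableAt := fun t ht => (hy t ht).differentiableAt
      differentiableAt_deriv := fun t ht => (hasDerivAt_deriv t ht).differentiableAt
      deriv_deriv_add := fun t ht => by rw [(hasDerivAt_deriv t ht).deriv, neg_add_cancel] }

theorem hasDerivAt_deriv (hy : IsSolutionOn q y s) (ht : t ∈ s) :
    HasDerivAt (deriv y) (-(q t • y t)) t :=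
  (hy.differentiableAt_deriv t ht).hasDerivAt.congr_deriv
    (eq_neg_of_add_eq_zero_left (hy.deriv_deriv_add t ht))

theorem hasDerivAt_wronskian (hf : IsSolutionOn q f s) (hy : IsSolutionOn q y s) (ht : t ∈ s) :
    HasDerivAt (wronskian f y) 0 t := by
  refine (((hf.differentiableAt t ht).hasDerivAt.smul (hy.hasDerivAt_deriv ht)).sub
    ((hf.hasDerivAt_deriv ht).smul (hy.differentiableAt t ht).hasDerivAt)).congr_deriv ?_
  simp only [smul_eq_mul]
  module

theorem wronskian_eq (hs : IsOpen s) (hs' : IsPreconnected s) (hf : IsSolutionOn q f s)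
    (hy : IsSolutionOn q y s) (ht : t ∈ s) (ht₀ : t₀ ∈ s) :
    wronskian f y t = wronskian f y t₀ :=
  hs.is_const_of_deriv_eq_zero hs'
    (fun _ hx => (hf.hasDerivAt_wronskian hy hx).differentiableAt.differentiableWithinAt)
    (fun _ hx => (hf.hasDerivAt_wronskian hy hx).deriv) ht ht₀

theorem exists_eq_smul_add_smul (hs : IsOpen s) (hs' : IsPreconnected s)
    (hf : IsSolutionOn q f s) (hg : IsSolutionOn q g s) (hy : IsSolutionOn q y s)
    (ht₀ : t₀ ∈ s) (hW : wronskian f g t₀ ≠ 0) :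
    ∃ c d : E, ∀ t ∈ s, y t = f t • c + g t • d := by
  refine ⟨-((wronskian f g t₀)⁻¹ • wronskian g y t₀), (wronskian f g t₀)⁻¹ • wronskian f y t₀,
    fun t ht => ?_⟩
  have cramer := wronskian_smul_eq_sub f g y t
  rw [wronskian_eq hs hs' hf hg ht ht₀, wronskian_eq hs hs' hf hy ht ht₀,
    wronskian_eq hs hs' hg hy ht ht₀] at cramer
  rw [← inv_smul_smul₀ hW (y t), cramer]
  module

end IsSolutionOn

end LinearEquation

section PolarForm

variable {q r r' α ω ω' p : ℝ → ℝ} {s : Set ℝ} {p' t : ℝ}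

theorem isSolutionOn_mul_cos (hs : IsOpen s)
    (hr : ∀ t ∈ s, HasDerivAt r (r' t) t)
    (hr' : ∀ t ∈ s, HasDerivAt r' ((ω t ^ 2 - q t) * r t) t)
    (hα : ∀ t ∈ s, HasDerivAt α (ω t) t)
    (hω : ∀ t ∈ s, HasDerivAt ω (ω' t) t)
    (hrω : ∀ t ∈ s, 2 * r' t * ω t + r t * ω' t = 0) :
    IsSolutionOn q (fun t => r t * Real.cos (α t)) s := by
  refine .of_hasDerivAt hs (fun t ht => (hr t ht).mul (hα t ht).cos) fun t ht => ?_
  refine (((hr' t ht).mul (hα t ht).cos).add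
    ((hr t ht).mul ((hα t ht).sin.neg.mul (hω t ht)))).congr_deriv ?_
  simp only [Pi.neg_apply, Pi.mul_apply, smul_eq_mul]
  linear_combination -Real.sin (α t) * hrω t ht

theorem wronskian_mul_cos_mul_sin (hr : DifferentiableAt ℝ r t) (hα : DifferentiableAt ℝ α t) :
    wronskian (fun x => r x * Real.cos (α x)) (fun x => r x * Real.sin (α x)) t =
      r t ^ 2 * deriv α t := by
  have hcos := (hr.hasDerivAt.fun_mul hα.hasDerivAt.cos).deriv
  have hsin := (hr.hasDerivAt.fun_mul hα.hasDerivAt.sin).deriv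
  rw [wronskian, hcos, hsin, smul_eq_mul, smul_eq_mul]
  linear_combination r t ^ 2 * deriv α t * Real.sin_sq_add_cos_sq (α t)

theorem inv_sqrt_abs_eq_exp {x : ℝ} (hx : x ≠ 0) : (√|x|)⁻¹ = Real.exp (-(Real.log x / 2)) := by
  rw [Real.exp_neg, Real.exp_half, Real.exp_log_eq_abs hx]

theorem hasDerivAt_inv_sqrt_abs (hp : HasDerivAt p p' t) (hp₀ : p t ≠ 0) :
    HasDerivAt (fun x => (√|p x|)⁻¹) (-(p' / p t / 2) * (√|p t|)⁻¹) t := by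
  have hexp := ((hp.log hp₀).div_const 2).neg.exp
  simp only [Pi.neg_apply, ← inv_sqrt_abs_eq_exp hp₀] at hexp
  refine (hexp.congr_deriv (mul_comm _ _)).congr_of_eventuallyEq ?_
  filter_upwards [hp.continuousAt.eventually_ne hp₀] with x hx using inv_sqrt_abs_eq_exp hx

end PolarForm

/-- `α` is a phase function for `y'' + q y = 0` on `s`: it is three times differentiable there, its
derivative does not vanish, and it satisfies Kummer's equation. Derivatives are two-sided, so the
notion is meant for open `s`. -/
structure IsPhaseFunctionOn (q α : ℝ → ℝ) (s : Set ℝ) : Prop where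
  differentiableAt : ∀ t ∈ s, DifferentiableAt ℝ α t
  differentiableAt_deriv : ∀ t ∈ s, DifferentiableAt ℝ (deriv α) t
  differentiableAt_deriv_deriv : ∀ t ∈ s, DifferentiableAt ℝ (deriv (deriv α)) t
  deriv_ne_zero : ∀ t ∈ s, deriv α t ≠ 0
  kummer : ∀ t ∈ s,
    q t - (deriv α t) ^ 2
      - (1 / 2) * (deriv (deriv (deriv α)) t / deriv α t)
      + (3 / 4) * (deriv (deriv α) t / deriv α t) ^ 2 = 0

namespace IsPhaseFunctionOn

variable {q α : ℝ → ℝ} {s : Set ℝ} {t : ℝ}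

theorem of_contDiffOn (hs : IsOpen s) (hα : ContDiffOn ℝ 3 α s)
    (hα' : ∀ t ∈ s, deriv α t ≠ 0)
    (hkummer : ∀ t ∈ s,
      q t - (deriv α t) ^ 2
        - (1 / 2) * (deriv (deriv (deriv α)) t / deriv α t)
        + (3 / 4) * (deriv (deriv α) t / deriv α t) ^ 2 = 0) :
    IsPhaseFunctionOn q α s := by
  have hderiv : ContDiffOn ℝ 2 (deriv α) s := hα.deriv_of_isOpen hs (by norm_num)
  have hderiv₂ : ContDiffOn ℝ 1 (deriv (deriv α)) s := hderiv.deriv_of_isOpen hs (by norm_num)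
  exact
    { differentiableAt := fun t ht =>
        (hα.differentiableOn (by norm_num)).differentiableAt (hs.mem_nhds ht)
      differentiableAt_deriv := fun t ht =>
        (hderiv.differentiableOn (by norm_num)).differentiableAt (hs.mem_nhds ht)
      differentiableAt_deriv_deriv := fun t ht =>
        (hderiv₂.differentiableOn (by norm_num)).differentiableAt (hs.mem_nhds ht)
      deriv_ne_zero := hα'
      kummer := hkummer }

theorem sub_const (h : IsPhaseFunctionOn q α s) (c : ℝ) :
    IsPhaseFunctionOn q (fun t => α t - c) s where
  differentiableAt t ht := (h.differentiableAt t ht).sub_const c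
  differentiableAt_deriv := by simpa only [deriv_sub_const_fun] using h.differentiableAt_deriv
  differentiableAt_deriv_deriv := by
    simpa only [deriv_sub_const_fun] using h.differentiableAt_deriv_deriv
  deriv_ne_zero := by simpa only [deriv_sub_const_fun] using h.deriv_ne_zero
  kummer := by simpa only [deriv_sub_const_fun] using h.kummer

-- Kummer's equation as a Riccati equation for `α'' / α'`.
theorem hasDerivAt_logDeriv (h : IsPhaseFunctionOn q α s) (ht : t ∈ s) :
    HasDerivAt (logDeriv (deriv α))
      (2 * (q t - deriv α t ^ 2) + logDeriv (deriv α) t ^ 2 / 2) t := by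
  have hα' := h.deriv_ne_zero t ht
  refine ((h.differentiableAt_deriv_deriv t ht).hasDerivAt.div
    (h.differentiableAt_deriv t ht).hasDerivAt hα').congr_deriv ?_
  have hquot : (deriv (deriv (deriv α)) t * deriv α t - deriv (deriv α) t * deriv (deriv α) t) /
      deriv α t ^ 2 = deriv (deriv (deriv α)) t / deriv α t
        - (deriv (deriv α) t / deriv α t) ^ 2 := by
    field_simp
  rw [hquot, logDeriv_apply]
  linear_combination -2 * h.kummer t ht

theorem hasDerivAt_amplitude (h : IsPhaseFunctionOn q α s) (ht : t ∈ s) :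
    HasDerivAt (fun x => (√|deriv α x|)⁻¹)
      (-(logDeriv (deriv α) t / 2) * (√|deriv α t|)⁻¹) t :=
  hasDerivAt_inv_sqrt_abs (h.differentiableAt_deriv t ht).hasDerivAt (h.deriv_ne_zero t ht)

theorem hasDerivAt_deriv_amplitude (h : IsPhaseFunctionOn q α s) (ht : t ∈ s) :
    HasDerivAt (fun x => -(logDeriv (deriv α) x / 2) * (√|deriv α x|)⁻¹)
      ((deriv α t ^ 2 - q t) * (√|deriv α t|)⁻¹) t := by
  refine (((h.hasDerivAt_logDeriv ht).div_const 2).fun_neg.mul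
    (h.hasDerivAt_amplitude ht)).congr_deriv ?_
  ring

theorem isSolutionOn_cos_div (hs : IsOpen s) (h : IsPhaseFunctionOn q α s) :
    IsSolutionOn q (fun t => Real.cos (α t) / √|deriv α t|) s := by
  simp only [div_eq_inv_mul]
  refine isSolutionOn_mul_cos hs (fun _ => h.hasDerivAt_amplitude)
    (fun _ => h.hasDerivAt_deriv_amplitude) (fun t ht => (h.differentiableAt t ht).hasDerivAt)
    (fun t ht => (h.differentiableAt_deriv t ht).hasDerivAt) fun t ht => ?_
  have hα' := h.deriv_ne_zero t ht
  rw [logDeriv_apply]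
  field_simp
  ring

theorem isSolutionOn_sin_div (hs : IsOpen s) (h : IsPhaseFunctionOn q α s) :
    IsSolutionOn q (fun t => Real.sin (α t) / √|deriv α t|) s := by
  simpa only [Real.cos_sub_pi_div_two, deriv_sub_const_fun] using
    (h.sub_const (Real.pi / 2)).isSolutionOn_cos_div hs

theorem wronskian_cos_div_sin_div_ne_zero (h : IsPhaseFunctionOn q α s) (ht : t ∈ s) :
    wronskian (fun x => Real.cos (α x) / √|deriv α x|)
      (fun x => Real.sin (α x) / √|deriv α x|) t ≠ 0 := by
  have hα' := h.deriv_ne_zero t ht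
  simp only [div_eq_inv_mul]
  rw [wronskian_mul_cos_mul_sin (h.hasDerivAt_amplitude ht).differentiableAt
    (h.differentiableAt t ht)]
  positivity

end IsPhaseFunctionOn

theorem phase_spans_solutions_general {E : Type*} [NormedAddCommGroup E] [NormedSpace ℝ E]
    {q α : ℝ → ℝ} {y : ℝ → E} {s : Set ℝ} (hs : IsOpen s) (hs' : IsPreconnected s)
    (hα : IsPhaseFunctionOn q α s) (hy : IsSolutionOn q y s) :
    ∃ c d : E, ∀ t ∈ s,
      y t = (Real.cos (α t) / √|deriv α t|) • c + (Real.sin (α t) / √|deriv α t|) • d := by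
  obtain rfl | ⟨t₀, ht₀⟩ := s.eq_empty_or_nonempty
  · exact ⟨0, 0, fun t ht => ht.elim⟩
  · exact (hα.isSolutionOn_cos_div hs).exists_eq_smul_add_smul hs hs' (hα.isSolutionOn_sin_div hs)
      hy ht₀ (hα.wronskian_cos_div_sin_div_ne_zero ht₀)

/-- If `α'` satisfies Kummer's equation for `y'' + q·y = 0` on the open interval
`(a,b)`, then every twice differentiable solution of `y'' + q·y = 0` on `(a,b)`
is a linear combination of `u(t) = cos(α(t))/√|α'(t)|` and
`v(t) = sin(α(t))/√|α'(t)|`. -/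
theorem phase_spans_solutions (a b : ℝ) (q α u v : ℝ → ℝ)
    (hq : ContinuousOn q (Set.Ioo a b))
    (hα : ContDiffOn ℝ 3 α (Set.Ioo a b))
    (hα' : ∀ t ∈ Set.Ioo a b, deriv α t ≠ 0)
    (hkummer : ∀ t ∈ Set.Ioo a b,
      q t - (deriv α t) ^ 2
        - (1 / 2) * (deriv (deriv (deriv α)) t / deriv α t)
        + (3 / 4) * (deriv (deriv α) t / deriv α t) ^ 2 = 0)
    (hu : ∀ t, u t = Real.cos (α t) / Real.sqrt |deriv α t|)
    (hv : ∀ t, v t = Real.sin (α t) / Real.sqrt |deriv α t|) :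
    ∀ y : ℝ → ℝ,
      (∀ t ∈ Set.Ioo a b, DifferentiableAt ℝ y t) →
      (∀ t ∈ Set.Ioo a b, DifferentiableAt ℝ (deriv y) t) →
      (∀ t ∈ Set.Ioo a b, deriv (deriv y) t + q t * y t = 0) →
      ∃ c d : ℝ, ∀ t ∈ Set.Ioo a b, y t = c * u t + d * v t := by
  intro y hy hy' hode
  obtain ⟨c, d, hcd⟩ := phase_spans_solutions_general isOpen_Ioo isPreconnected_Ioo
    (.of_contDiffOn isOpen_Ioo hα hα' hkummer) ⟨hy, hy', hode⟩
  exact ⟨c, d, by simpa only [hu, hv, smul_eq_mul, mul_comm] using hcd⟩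
end

section
/- Let n ≥ 1 be an integer. There exists a constant C > 0, depending only on n, with the following property: for every continuous function f : [−1,1]³ → ℝ, if a_{i,j,k} = (8/π³) ∫_{−1}^{1}∫_{−1}^{1}∫_{−1}^{1} f(x,y,z)·T_i(x)·T_j(y)·T_k(z) · (1−x²)^{−1/2}(1−y²)^{−1/2}(1−z²)^{−1/2} dx dy dz for 0 ≤ i,j,k ≤ n, and b_{i,j,k} = (8/n³) · Σ''_{r=0}^{n} Σ''_{s=0}^{n} Σ''_{t=0}^{n} T_i(ρ_{r,n})·T_j(ρ_{s,n})·T_k(ρ_{t,n})·f(ρ_{r,n}, ρ_{s,n}, ρ_{t,n}), then sup over (x,y,z) ∈ [−1,1]³ of |f(x,y,z) − Σ''_{i=0}^{n}Σ''_{j=0}^{n}Σ''_{k=0}^{n} b_{i,j,k} T_i(x)T_j(y)T_k(z)| is at most C times the sup over (x,y,z) ∈ [−1,1]³ of |f(x,y,z) − Σ''_{i=0}^{n}Σ''_{j=0}^{n}Σ''_{k=0}^{n} a_{i,j,k} T_i(x)T_j(y)T_k(z)|. -/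
/-- The `l`-th node of the `(n+1)`-point Chebyshev grid on `[-1,1]`. -/
noncomputable def chebNode (n l : ℕ) : ℝ := -Real.cos (Real.pi * l / n)

/-- The weight halving the first and last terms of a `Σ''` sum. -/
noncomputable def chebWeight (n l : ℕ) : ℝ := if l = 0 ∨ l = n then 1 / 2 else 1

/-!
Discrete orthogonality on the Chebyshev grid makes `f ↦ chebSum n (chebCoeff n f)` a linear
projection onto the polynomials of degree at most `n` in each variable. Since `|T_k| ≤ 1` and the
`n + 1` weights add up to `n`, the interpolant of `g` is at most `(2 * n) ^ d` times the maximum of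
`|g|` in dimension `d`. Applied to `g = f - p`, where `p` is any such polynomial, this bounds the
difference of `p` and the interpolant of `f`. The truncated Chebyshev series is one choice of `p`.
-/

open Finset Polynomial

section Weights

lemma chebWeight_pos (n l : ℕ) : 0 < chebWeight n l := by
  unfold chebWeight
  split_ifs <;> norm_num

lemma sum_chebWeight_mul {n : ℕ} (hn : n ≠ 0) (f : ℕ → ℝ) :
    ∑ r ∈ range (n + 1), chebWeight n r * f r =
      (∑ r ∈ range n, f r + ∑ r ∈ range n, f (r + 1)) / 2 := by
  obtain ⟨m, rfl⟩ := Nat.exists_eq_succ_of_ne_zero hn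
  have interior : ∀ r ∈ range m, chebWeight (m + 1) (r + 1) * f (r + 1) = f (r + 1) := by
    intro r hr
    have : ¬(r + 1 = 0 ∨ r + 1 = m + 1) := by grind
    rw [chebWeight, if_neg this, one_mul]
  rw [sum_range_succ, sum_range_succ', sum_congr rfl interior, sum_range_succ' f,
    sum_range_succ fun r => f (r + 1)]
  simp only [chebWeight, true_or, or_true, if_true]
  ring

lemma sum_chebWeight {n : ℕ} (hn : n ≠ 0) : ∑ r ∈ range (n + 1), chebWeight n r = n := by
  simpa using sum_chebWeight_mul hn fun _ => 1

lemma sin_mul_sum_chebWeight_mul_cos {n : ℕ} (hn : n ≠ 0) (a b : ℝ) :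
    Real.sin (a / 2) * ∑ r ∈ range (n + 1), chebWeight n r * Real.cos (a * r + b) =
      Real.sin (n * a / 2) * Real.cos (n * a / 2 + b) * Real.cos (a / 2) := by
  have left := Real.sin_mul_sum_cos n a b
  have right := Real.sin_mul_sum_cos n a (a + b)
  have shift : ∀ r : ℕ, a * ↑(r + 1) + b = a * r + (a + b) := fun r => by push_cast; ring
  have mean : Real.cos ((n - 1) * a / 2 + b) + Real.cos ((n - 1) * a / 2 + (a + b)) =
      2 * Real.cos (n * a / 2 + b) * Real.cos (a / 2) := by
    rw [Real.two_mul_cos_mul_cos]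
    ring_nf
  rw [sum_chebWeight_mul hn]
  simp only [shift]
  linear_combination (left + right + Real.sin (n * a / 2) * mean) / 2

end Weights

section DiscreteOrthogonality

lemma chebNode_mem_Icc (n l : ℕ) : chebNode n l ∈ Set.Icc (-1 : ℝ) 1 :=
  ⟨neg_le_neg (Real.cos_le_one _), neg_le.1 (Real.neg_one_le_cos _)⟩

lemma eval_T_chebNode (n r : ℕ) (p : ℤ) :
    (Chebyshev.T ℝ p).eval (chebNode n r) =
      Real.cos (-(p * Real.pi / n) * r + p * Real.pi) := by
  rw [chebNode, ← Real.cos_pi_sub, Chebyshev.T_real_cos]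
  ring_nf

lemma eval_T_chebNode_of_dvd {n : ℕ} (hn : n ≠ 0) {p : ℤ} (hp : (2 * n : ℤ) ∣ p) (r : ℕ) :
    (Chebyshev.T ℝ p).eval (chebNode n r) = 1 := by
  obtain ⟨q, rfl⟩ := hp
  rw [eval_T_chebNode, ← Real.cos_int_mul_two_pi ((n - r) * q)]
  congr 1
  push_cast
  field

lemma sum_chebWeight_mul_eval_T {n : ℕ} (hn : n ≠ 0) (p : ℤ) :
    ∑ r ∈ range (n + 1), chebWeight n r * (Chebyshev.T ℝ p).eval (chebNode n r) =
      if (2 * n : ℤ) ∣ p then (n : ℝ) else 0 := by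
  split_ifs with hp
  · simp only [eval_T_chebNode_of_dvd hn hp, mul_one, sum_chebWeight hn]
  · simp only [eval_T_chebNode]
    have hn' : (n : ℝ) ≠ 0 := Nat.cast_ne_zero.2 hn
    have sin_ne_zero : Real.sin (-(p * Real.pi / n) / 2) ≠ 0 := by
      rw [Real.sin_ne_zero_iff]
      intro q hq
      refine hp ⟨-q, ?_⟩
      field_simp at hq
      exact_mod_cast (by linear_combination hq : (p : ℝ) = 2 * n * -q)
    refine (mul_eq_zero.1 ?_).resolve_left sin_ne_zero
    have half : n * -(p * Real.pi / n) / 2 = -(p * Real.pi / 2) := by field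
    have sin_mul_cos : Real.sin (p * Real.pi / 2) * Real.cos (p * Real.pi / 2) = 0 := by
      have := Real.sin_two_mul (p * Real.pi / 2)
      rw [mul_div_cancel₀ _ two_ne_zero, Real.sin_int_mul_pi] at this
      linarith
    rw [sin_mul_sum_chebWeight_mul_cos hn, half, Real.sin_neg,
      show -(p * Real.pi / 2) + p * Real.pi = p * Real.pi / 2 by ring, neg_mul, sin_mul_cos,
      neg_zero, zero_mul]

lemma two_mul_dvd_sub_iff {n k m : ℕ} (hk : k ≤ n) (hm : m ≤ n) :
    (2 * n : ℤ) ∣ k - m ↔ k = m := by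
  refine ⟨fun h => ?_, by rintro rfl; simp⟩
  rcases n.eq_zero_or_pos with rfl | hn
  · lia
  · have := Int.eq_zero_of_abs_lt_dvd h (abs_lt.2 ⟨by lia, by lia⟩)
    lia

lemma two_mul_dvd_add_iff {n k m : ℕ} (hk : k ≤ n) (hm : m ≤ n) :
    (2 * n : ℤ) ∣ k + m ↔ k = m ∧ (m = 0 ∨ m = n) := by
  refine ⟨fun h => ?_, ?_⟩
  · rcases (show k + m ≤ 2 * n by lia).lt_or_eq with lt | eq
    · have := Nat.eq_zero_of_dvd_of_lt (by exact_mod_cast h) lt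
      lia
    · lia
  · rintro ⟨rfl, rfl | rfl⟩
    · simp
    · exact ⟨1, by ring⟩

lemma two_div_mul_sum_chebWeight_mul_eval_T_mul_eval_T {n k m : ℕ} (hn : n ≠ 0) (hk : k ≤ n)
    (hm : m ≤ n) :
    2 / n * ∑ r ∈ range (n + 1), chebWeight n r *
        ((Chebyshev.T ℝ k).eval (chebNode n r) * (Chebyshev.T ℝ m).eval (chebNode n r)) =
      if k = m then (chebWeight n m)⁻¹ else 0 := by
  have hn' : (n : ℝ) ≠ 0 := Nat.cast_ne_zero.2 hn
  have product : ∀ x : ℝ, (Chebyshev.T ℝ k).eval x * (Chebyshev.T ℝ m).eval x =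
      ((Chebyshev.T ℝ (k + m)).eval x + (Chebyshev.T ℝ (k - m)).eval x) / 2 := by
    intro x
    have := congrArg (eval x) (Chebyshev.T_mul_T ℝ k m)
    simp only [eval_mul, eval_add, eval_ofNat] at this
    linarith
  calc 2 / n * ∑ r ∈ range (n + 1), chebWeight n r *
        ((Chebyshev.T ℝ k).eval (chebNode n r) * (Chebyshev.T ℝ m).eval (chebNode n r))
      = (∑ r ∈ range (n + 1), chebWeight n r * (Chebyshev.T ℝ (k + m)).eval (chebNode n r) +
          ∑ r ∈ range (n + 1), chebWeight n r * (Chebyshev.T ℝ (k - m)).eval (chebNode n r)) /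
            n := by
        simp only [product, ← sum_add_distrib, mul_sum, sum_div]
        exact sum_congr rfl fun r _ => by ring
    _ = ((if k = m ∧ (m = 0 ∨ m = n) then (n : ℝ) else 0) + if k = m then (n : ℝ) else 0) / n := by
        simp only [sum_chebWeight_mul_eval_T hn, two_mul_dvd_add_iff hk hm,
          two_mul_dvd_sub_iff hk hm]
    _ = if k = m then (chebWeight n m)⁻¹ else 0 := by
        by_cases endpoint : m = 0 ∨ m = n <;> by_cases diagonal : k = m <;>
          simp [chebWeight, endpoint, diagonal, hn', add_div, one_add_one_eq_two]

end DiscreteOrthogonality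

section TensorProduct

variable {ι : Type*}

/-- The node with multi-index `r` of the tensor product Chebyshev grid on `[-1,1]^ι`. -/
noncomputable def chebGrid (n : ℕ) (r : ι → ℕ) : ι → ℝ := fun i => chebNode n (r i)

lemma chebGrid_mem_Icc (n : ℕ) (r : ι → ℕ) : chebGrid n r ∈ Set.Icc (-1 : ι → ℝ) 1 :=
  ⟨fun i => (chebNode_mem_Icc n (r i)).1, fun i => (chebNode_mem_Icc n (r i)).2⟩

variable [Fintype ι]

/-- The tensor product `∏ i, T_{k i}(x i)` of Chebyshev polynomials. -/
noncomputable def chebTensor (k : ι → ℕ) (x : ι → ℝ) : ℝ :=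
  ∏ i, (Chebyshev.T ℝ (k i)).eval (x i)

lemma abs_chebTensor_le_one (k : ι → ℕ) {x : ι → ℝ} (hx : x ∈ Set.Icc (-1 : ι → ℝ) 1) :
    |chebTensor k x| ≤ 1 := by
  rw [chebTensor, abs_prod]
  exact prod_le_one (fun _ _ => abs_nonneg _) fun i _ =>
    Chebyshev.abs_eval_T_real_le_one _ (abs_le.2 ⟨hx.1 i, hx.2 i⟩)

/-- The weight of the multi-index `k` in an iterated `Σ''` sum. -/
noncomputable def chebTensorWeight (n : ℕ) (k : ι → ℕ) : ℝ := ∏ i, chebWeight n (k i)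

lemma chebTensorWeight_pos (n : ℕ) (k : ι → ℕ) : 0 < chebTensorWeight n k :=
  prod_pos fun i _ => chebWeight_pos n (k i)

variable [DecidableEq ι]

variable (ι) in
/-- The multi-indices with entries in `0, …, n`, which label both the nodes of the tensor product
grid and the terms of a truncated Chebyshev series. -/
def chebIndices (n : ℕ) : Finset (ι → ℕ) := Fintype.piFinset fun _ => range (n + 1)

/-- The iterated `Σ''` sum of `c k * T_k(x)`, where `T_k` is `chebTensor k`. -/
noncomputable def chebSum (n : ℕ) (c : (ι → ℕ) → ℝ) (x : ι → ℝ) : ℝ :=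
  ∑ k ∈ chebIndices ι n, chebTensorWeight n k * c k * chebTensor k x

/-- The coefficients of the multivariate Chebyshev interpolant of `f`, which is
`chebSum n (chebCoeff n f)`. -/
noncomputable def chebCoeff (n : ℕ) (f : (ι → ℝ) → ℝ) (k : ι → ℕ) : ℝ :=
  (2 / n) ^ Fintype.card ι * ∑ r ∈ chebIndices ι n,
    chebTensorWeight n r * chebTensor k (chebGrid n r) * f (chebGrid n r)

lemma mem_chebIndices {n : ℕ} {k : ι → ℕ} : k ∈ chebIndices ι n ↔ ∀ i, k i ≤ n := by
  simp [chebIndices, Fintype.mem_piFinset]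

lemma sum_chebTensorWeight {n : ℕ} (hn : n ≠ 0) :
    ∑ k ∈ chebIndices ι n, chebTensorWeight n k = (n : ℝ) ^ Fintype.card ι := by
  simp only [chebIndices, chebTensorWeight, sum_prod_piFinset, sum_chebWeight hn, prod_const,
    card_univ]

lemma abs_sum_chebTensorWeight_mul_le {n : ℕ} (hn : n ≠ 0) {g : (ι → ℕ) → ℝ} {K : ℝ}
    (hg : ∀ k ∈ chebIndices ι n, |g k| ≤ K) :
    |∑ k ∈ chebIndices ι n, chebTensorWeight n k * g k| ≤ n ^ Fintype.card ι * K := by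
  calc |∑ k ∈ chebIndices ι n, chebTensorWeight n k * g k|
      ≤ ∑ k ∈ chebIndices ι n, |chebTensorWeight n k * g k| := abs_sum_le_sum_abs _ _
    _ ≤ ∑ k ∈ chebIndices ι n, chebTensorWeight n k * K := by
        refine sum_le_sum fun k hk => ?_
        rw [abs_mul, abs_of_pos (chebTensorWeight_pos n k)]
        exact mul_le_mul_of_nonneg_left (hg k hk) (chebTensorWeight_pos n k).le
    _ = n ^ Fintype.card ι * K := by rw [← sum_mul, sum_chebTensorWeight hn]

lemma abs_chebSum_le {n : ℕ} (hn : n ≠ 0) {c : (ι → ℕ) → ℝ} {K : ℝ}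
    (hc : ∀ k ∈ chebIndices ι n, |c k| ≤ K) {x : ι → ℝ} (hx : x ∈ Set.Icc (-1 : ι → ℝ) 1) :
    |chebSum n c x| ≤ n ^ Fintype.card ι * K := by
  simp only [chebSum, mul_assoc]
  refine abs_sum_chebTensorWeight_mul_le hn fun k hk => ?_
  rw [abs_mul]
  exact (mul_le_of_le_one_right (abs_nonneg _) (abs_chebTensor_le_one k hx)).trans (hc k hk)

lemma abs_chebCoeff_le {n : ℕ} (hn : n ≠ 0) {f : (ι → ℝ) → ℝ} {M : ℝ}
    (hf : ∀ r ∈ chebIndices ι n, |f (chebGrid n r)| ≤ M) (k : ι → ℕ) :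
    |chebCoeff n f k| ≤ 2 ^ Fintype.card ι * M := by
  have hn' : (n : ℝ) ≠ 0 := Nat.cast_ne_zero.2 hn
  have term_le : ∀ r ∈ chebIndices ι n,
      |chebTensor k (chebGrid n r) * f (chebGrid n r)| ≤ M := by
    intro r hr
    rw [abs_mul]
    exact (mul_le_of_le_one_left (abs_nonneg _)
      (abs_chebTensor_le_one k (chebGrid_mem_Icc n r))).trans (hf r hr)
  simp only [chebCoeff, mul_assoc]
  rw [abs_mul, abs_of_nonneg (by positivity)]
  calc (2 / (n : ℝ)) ^ Fintype.card ι * _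
      ≤ (2 / (n : ℝ)) ^ Fintype.card ι * (n ^ Fintype.card ι * M) := by
        gcongr
        exact abs_sum_chebTensorWeight_mul_le hn term_le
    _ = 2 ^ Fintype.card ι * M := by
        rw [← mul_assoc, ← mul_pow, div_mul_cancel₀ _ hn']

lemma chebCoeff_chebTensor {n : ℕ} (hn : n ≠ 0) {k m : ι → ℕ} (hk : k ∈ chebIndices ι n)
    (hm : m ∈ chebIndices ι n) :
    chebCoeff n (chebTensor m) k = if k = m then (chebTensorWeight n m)⁻¹ else 0 := by
  rw [mem_chebIndices] at hk hm
  calc chebCoeff n (chebTensor m) k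
      = ∏ i, (2 / n * ∑ r ∈ range (n + 1), chebWeight n r *
          ((Chebyshev.T ℝ (k i)).eval (chebNode n r) *
            (Chebyshev.T ℝ (m i)).eval (chebNode n r))) := by
        simp only [chebCoeff, chebTensor, chebTensorWeight, chebGrid, chebIndices, mul_assoc,
          prod_mul_distrib, prod_const, card_univ, ← sum_prod_piFinset]
    _ = ∏ i, if k i = m i then (chebWeight n (m i))⁻¹ else 0 :=
        prod_congr rfl fun i _ =>
          two_div_mul_sum_chebWeight_mul_eval_T_mul_eval_T hn (hk i) (hm i)
    _ = if k = m then (chebTensorWeight n m)⁻¹ else 0 := by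
        simp only [Fintype.prod_ite_zero, funext_iff, chebTensorWeight, prod_inv_distrib]

lemma chebCoeff_sub (n : ℕ) (f g : (ι → ℝ) → ℝ) (k : ι → ℕ) :
    chebCoeff n (f - g) k = chebCoeff n f k - chebCoeff n g k := by
  simp only [chebCoeff, Pi.sub_apply, mul_sub, sum_sub_distrib]

lemma chebCoeff_chebSum {n : ℕ} (hn : n ≠ 0) (c : (ι → ℕ) → ℝ) {k : ι → ℕ}
    (hk : k ∈ chebIndices ι n) : chebCoeff n (chebSum n c) k = c k := by
  calc chebCoeff n (chebSum n c) k
      = ∑ m ∈ chebIndices ι n, chebTensorWeight n m * c m * chebCoeff n (chebTensor m) k := by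
        simp only [chebCoeff, chebSum, mul_sum]
        rw [sum_comm]
        exact sum_congr rfl fun m _ => sum_congr rfl fun r _ => by ring
    _ = ∑ m ∈ chebIndices ι n, if k = m then c m else 0 := by
        refine sum_congr rfl fun m hm => ?_
        rw [chebCoeff_chebTensor hn hk hm, mul_ite, mul_zero, mul_right_comm,
          mul_inv_cancel₀ (chebTensorWeight_pos n m).ne', one_mul]
    _ = c k := by rw [sum_ite_eq, if_pos hk]

lemma chebSum_chebCoeff_sub_chebSum {n : ℕ} (hn : n ≠ 0) (f : (ι → ℝ) → ℝ)
    (c : (ι → ℕ) → ℝ) (x : ι → ℝ) :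
    chebSum n (chebCoeff n (f - chebSum n c)) x =
      chebSum n (chebCoeff n f) x - chebSum n c x := by
  simp only [chebSum, ← sum_sub_distrib]
  refine sum_congr rfl fun k hk => ?_
  rw [← sub_mul, ← mul_sub, ← chebCoeff_chebSum hn c hk, ← chebCoeff_sub]

theorem trivariate_chebyshev_interpolation_near_best_general {n : ℕ} (hn : n ≠ 0)
    (f : (ι → ℝ) → ℝ) (c : (ι → ℕ) → ℝ) {M : ℝ}
    (hM : ∀ x ∈ Set.Icc (-1 : ι → ℝ) 1, |f x - chebSum n c x| ≤ M) {x : ι → ℝ}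
    (hx : x ∈ Set.Icc (-1 : ι → ℝ) 1) :
    |f x - chebSum n (chebCoeff n f) x| ≤ (1 + (2 * n) ^ Fintype.card ι) * M := by
  have interp_le : |chebSum n (chebCoeff n (f - chebSum n c)) x| ≤
      n ^ Fintype.card ι * (2 ^ Fintype.card ι * M) :=
    abs_chebSum_le hn
      (fun k _ => abs_chebCoeff_le hn (fun r _ => hM _ (chebGrid_mem_Icc n r)) k) hx
  calc |f x - chebSum n (chebCoeff n f) x|
      = |(f x - chebSum n c x) - chebSum n (chebCoeff n (f - chebSum n c)) x| := by
        rw [chebSum_chebCoeff_sub_chebSum hn, sub_sub_sub_cancel_right]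
    _ ≤ |f x - chebSum n c x| + |chebSum n (chebCoeff n (f - chebSum n c)) x| := abs_sub _ _
    _ ≤ M + n ^ Fintype.card ι * (2 ^ Fintype.card ι * M) := add_le_add (hM x hx) interp_le
    _ = (1 + (2 * n) ^ Fintype.card ι) * M := by ring

end TensorProduct

section ThreeVariables

lemma sum_piFinset_fin_three {α β : Type*} [AddCommMonoid β] (s : Finset α)
    (F : (Fin 3 → α) → β) :
    ∑ p ∈ Fintype.piFinset fun _ => s, F p = ∑ i ∈ s, ∑ j ∈ s, ∑ k ∈ s, F ![i, j, k] := by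
  have eta : ∀ p : Fin 3 → α, ![p 0, p 1, p 2] = p := FinVec.etaExpand_eq
  simp only [← sum_product']
  refine sum_nbij' (fun p => (p 0, p 1, p 2)) (fun q => ![q.1, q.2.1, q.2.2]) ?_ ?_ ?_ ?_ ?_ <;>
    simp +contextual [Fintype.mem_piFinset, Fin.forall_fin_succ, eta]

lemma chebSum_fin_three (n : ℕ) (c : (Fin 3 → ℕ) → ℝ) (x : Fin 3 → ℝ) :
    chebSum n c x =
      ∑ i ∈ range (n + 1), ∑ j ∈ range (n + 1), ∑ k ∈ range (n + 1),
        chebWeight n i * chebWeight n j * chebWeight n k * c ![i, j, k] *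
          ((Chebyshev.T ℝ i).eval (x 0) * (Chebyshev.T ℝ j).eval (x 1) *
            (Chebyshev.T ℝ k).eval (x 2)) := by
  simp [chebSum, chebIndices, sum_piFinset_fin_three, chebTensorWeight, chebTensor,
    Fin.prod_univ_three]

lemma chebCoeff_fin_three (n : ℕ) (f : (Fin 3 → ℝ) → ℝ) (k : Fin 3 → ℕ) :
    chebCoeff n f k = 8 / (n : ℝ) ^ 3 *
      ∑ r ∈ range (n + 1), ∑ s ∈ range (n + 1), ∑ t ∈ range (n + 1),
        chebWeight n r * chebWeight n s * chebWeight n t *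
          ((Chebyshev.T ℝ (k 0)).eval (chebNode n r) * (Chebyshev.T ℝ (k 1)).eval (chebNode n s) *
            (Chebyshev.T ℝ (k 2)).eval (chebNode n t)) *
          f (chebGrid n ![r, s, t]) := by
  have eight : (2 / (n : ℝ)) ^ 3 = 8 / n ^ 3 := by rw [div_pow]; norm_num
  simp [chebCoeff, chebIndices, sum_piFinset_fin_three, chebTensorWeight, chebTensor, chebGrid,
    Fin.prod_univ_three, eight]

end ThreeVariables

/-- The error of the `n`-th order trivariate Chebyshev interpolant, whose
coefficients `b` come from the values of `f` on the tensor product Chebyshev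
grid, is controlled (uniformly on `[-1,1]³`, up to a constant depending only on
`n`) by the error of the truncated trivariate Chebyshev series of `f`, whose
coefficients `a` are given by the weighted integrals of `f` against products of
Chebyshev polynomials. -/
theorem trivariate_chebyshev_interpolation_near_best (n : ℕ) (hn : 1 ≤ n) :
    ∃ C : ℝ, 0 < C ∧
      ∀ f : ℝ → ℝ → ℝ → ℝ,
        ContinuousOn (fun p : ℝ × ℝ × ℝ => f p.1 p.2.1 p.2.2)
          (Set.Icc (-1 : ℝ) 1 ×ˢ Set.Icc (-1 : ℝ) 1 ×ˢ Set.Icc (-1 : ℝ) 1) →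
        ∀ A B : ℕ → ℕ → ℕ → ℝ,
        (∀ i j k, A i j k = 8 / Real.pi ^ 3 *
          ∫ x in Set.Icc (-1 : ℝ) 1, ∫ y in Set.Icc (-1 : ℝ) 1,
            ∫ z in Set.Icc (-1 : ℝ) 1,
              f x y z * ((Polynomial.Chebyshev.T ℝ (i : ℤ)).eval x *
                  (Polynomial.Chebyshev.T ℝ (j : ℤ)).eval y *
                  (Polynomial.Chebyshev.T ℝ (k : ℤ)).eval z) /
                (Real.sqrt (1 - x ^ 2) * Real.sqrt (1 - y ^ 2) *
                  Real.sqrt (1 - z ^ 2))) →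
        (∀ i j k, B i j k = 8 / (n : ℝ) ^ 3 *
          ∑ r ∈ Finset.range (n + 1), ∑ s ∈ Finset.range (n + 1),
            ∑ t ∈ Finset.range (n + 1),
              chebWeight n r * chebWeight n s * chebWeight n t *
                ((Polynomial.Chebyshev.T ℝ (i : ℤ)).eval (chebNode n r) *
                  (Polynomial.Chebyshev.T ℝ (j : ℤ)).eval (chebNode n s) *
                  (Polynomial.Chebyshev.T ℝ (k : ℤ)).eval (chebNode n t)) *
                f (chebNode n r) (chebNode n s) (chebNode n t)) →
        ∀ M : ℝ,
          (∀ x ∈ Set.Icc (-1 : ℝ) 1, ∀ y ∈ Set.Icc (-1 : ℝ) 1,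
            ∀ z ∈ Set.Icc (-1 : ℝ) 1,
            |f x y z -
              ∑ i ∈ Finset.range (n + 1), ∑ j ∈ Finset.range (n + 1),
                ∑ k ∈ Finset.range (n + 1),
                  chebWeight n i * chebWeight n j * chebWeight n k *
                    A i j k *
                    ((Polynomial.Chebyshev.T ℝ (i : ℤ)).eval x *
                      (Polynomial.Chebyshev.T ℝ (j : ℤ)).eval y *
                      (Polynomial.Chebyshev.T ℝ (k : ℤ)).eval z)| ≤ M) →
          (∀ x ∈ Set.Icc (-1 : ℝ) 1, ∀ y ∈ Set.Icc (-1 : ℝ) 1,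
            ∀ z ∈ Set.Icc (-1 : ℝ) 1,
            |f x y z -
              ∑ i ∈ Finset.range (n + 1), ∑ j ∈ Finset.range (n + 1),
                ∑ k ∈ Finset.range (n + 1),
                  chebWeight n i * chebWeight n j * chebWeight n k *
                    B i j k *
                    ((Polynomial.Chebyshev.T ℝ (i : ℤ)).eval x *
                      (Polynomial.Chebyshev.T ℝ (j : ℤ)).eval y *
                      (Polynomial.Chebyshev.T ℝ (k : ℤ)).eval z)| ≤ C * M) := by
  refine ⟨1 + (2 * n) ^ 3, by positivity, fun f _ A B _ hB M hM x hx y hy z hz => ?_⟩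
  have hM' : ∀ p ∈ Set.Icc (-1 : Fin 3 → ℝ) 1,
      |f (p 0) (p 1) (p 2) - chebSum n (fun k => A (k 0) (k 1) (k 2)) p| ≤ M := fun p hp => by
    rw [chebSum_fin_three]
    exact hM _ ⟨hp.1 0, hp.2 0⟩ _ ⟨hp.1 1, hp.2 1⟩ _ ⟨hp.1 2, hp.2 2⟩
  have hxyz : ![x, y, z] ∈ Set.Icc (-1 : Fin 3 → ℝ) 1 := by
    simp [Pi.le_def, Fin.forall_fin_succ, hx.1, hx.2, hy.1, hy.2, hz.1, hz.2]
  simpa [hB, chebSum_fin_three, chebCoeff_fin_three, chebGrid] using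
    trivariate_chebyshev_interpolation_near_best_general (Nat.one_le_iff_ne_zero.1 hn)
      (fun p => f (p 0) (p 1) (p 2)) _ hM' hxyz
end
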